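/- arXiv:2408.10109 — 2 statements merged into one kernel-verified Lean document; each statement's English description precedes it below -/
import Mathlib

section
/- Let W, ΔW, U ∈ ℝ^{m×s} and let R ∈ ℝ^{s×s} be nonsingular. Assume W + ΔW = U·R and ‖ΔW‖ < σ_min(W). Then ‖R⁻¹‖ ≤ ‖U‖ / (σ_min(W) − ‖ΔW‖). -/
open scoped Matrix

/-- The spectral norm (`ℓ²→ℓ²` operator norm) of a real matrix. -/
noncomputable def specNorm {m n : Type*} [Fintype m] [Fintype n] [DecidableEq n]
    (A : Matrix m n ℝ) : ℝ :=
  ‖LinearMap.toContinuousLinearMap (Matrix.toEuclideanLin A)‖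

/-- The smallest singular value of a real matrix: the infimum of `‖A x‖₂` over
unit vectors `x`. -/
noncomputable def sigmaMin {m n : Type*} [Fintype m] [Fintype n] [DecidableEq n]
    (A : Matrix m n ℝ) : ℝ :=
  sInf ((fun x : EuclideanSpace ℝ n => ‖Matrix.toEuclideanLin A x‖) ''
    {x : EuclideanSpace ℝ n | ‖x‖ = 1})

/-- The 2-norm condition number `κ(A) = ‖A‖ / σ_min(A)`. -/
noncomputable def condNum {m n : Type*} [Fintype m] [Fintype n] [DecidableEq n]
    (A : Matrix m n ℝ) : ℝ :=
  specNorm A / sigmaMin A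

/-!
Multiplying `A = (A + E) - E` by `B` gives `σ_min(A) ‖B‖ ≤ ‖A B‖ ≤ ‖(A + E) B‖ + ‖E‖ ‖B‖`.
For `A = W`, `E = ΔW` and `B = R⁻¹` the product `(A + E) B` is `U`.
-/

section SpectralNorm

open scoped Matrix.Norms.L2Operator

variable {l m n : Type*} [Fintype l] [Fintype m] [Fintype n] [DecidableEq l] [DecidableEq n]

theorem specNorm_eq_l2_opNorm (A : Matrix m n ℝ) : specNorm A = ‖A‖ := rfl

theorem specNorm_nonneg (A : Matrix m n ℝ) : 0 ≤ specNorm A := norm_nonneg _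

theorem specNorm_sub_le (A B : Matrix m n ℝ) : specNorm (A - B) ≤ specNorm A + specNorm B := by
  simpa only [specNorm_eq_l2_opNorm] using norm_sub_le A B

theorem specNorm_smul (c : ℝ) (A : Matrix m n ℝ) : specNorm (c • A) = ‖c‖ * specNorm A := by
  simpa only [specNorm_eq_l2_opNorm] using norm_smul c A

theorem specNorm_mul_le (A : Matrix m n ℝ) (B : Matrix n l ℝ) :
    specNorm (A * B) ≤ specNorm A * specNorm B := by
  simpa only [specNorm_eq_l2_opNorm] using Matrix.l2_opNorm_mul A B

theorem norm_toEuclideanLin_le_specNorm_mul (A : Matrix m n ℝ) (x : EuclideanSpace ℝ n) :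
    ‖Matrix.toEuclideanLin A x‖ ≤ specNorm A * ‖x‖ :=
  (Matrix.toEuclideanLin A).toContinuousLinearMap.le_opNorm x

theorem specNorm_le_bound {A : Matrix m n ℝ} {C : ℝ} (hC : 0 ≤ C)
    (h : ∀ x, ‖Matrix.toEuclideanLin A x‖ ≤ C * ‖x‖) : specNorm A ≤ C :=
  ContinuousLinearMap.opNorm_le_bound _ hC h

end SpectralNorm

section SmallestSingularValue

variable {l m n : Type*} [Fintype l] [Fintype m] [Fintype n] [DecidableEq l] [DecidableEq n]

theorem sigmaMin_nonneg (A : Matrix m n ℝ) : 0 ≤ sigmaMin A :=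
  Real.sInf_nonneg (Set.forall_mem_image.mpr fun _ _ => norm_nonneg _)

theorem sigmaMin_le_norm_of_norm_eq_one (A : Matrix m n ℝ) {x : EuclideanSpace ℝ n}
    (hx : ‖x‖ = 1) : sigmaMin A ≤ ‖Matrix.toEuclideanLin A x‖ :=
  csInf_le ⟨0, Set.forall_mem_image.mpr fun _ _ => norm_nonneg _⟩ (Set.mem_image_of_mem _ hx)

theorem sigmaMin_mul_norm_le (A : Matrix m n ℝ) (x : EuclideanSpace ℝ n) :
    sigmaMin A * ‖x‖ ≤ ‖Matrix.toEuclideanLin A x‖ := by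
  rcases eq_or_ne x 0 with rfl | hx
  · simp
  have h := sigmaMin_le_norm_of_norm_eq_one A (norm_smul_inv_norm (𝕜 := ℝ) hx)
  rwa [map_smul, norm_smul, norm_inv, RCLike.norm_ofReal, abs_norm, inv_mul_eq_div,
    le_div_iff₀ (norm_pos_iff.mpr hx)] at h

theorem sigmaMin_mul_specNorm_le (A : Matrix m n ℝ) (B : Matrix n l ℝ) :
    sigmaMin A * specNorm B ≤ specNorm (A * B) := by
  rw [← Real.norm_of_nonneg (sigmaMin_nonneg A), ← specNorm_smul]
  refine specNorm_le_bound (specNorm_nonneg _) fun x => ?_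
  calc ‖Matrix.toEuclideanLin (sigmaMin A • B) x‖
      = sigmaMin A * ‖Matrix.toEuclideanLin B x‖ := by
        rw [map_smul, LinearMap.smul_apply, norm_smul, Real.norm_of_nonneg (sigmaMin_nonneg A)]
    _ ≤ ‖Matrix.toEuclideanLin A (Matrix.toEuclideanLin B x)‖ := sigmaMin_mul_norm_le A _
    _ = ‖Matrix.toEuclideanLin (A * B) x‖ := by
        rw [Matrix.toLpLin_mul_same, LinearMap.comp_apply]
    _ ≤ specNorm (A * B) * ‖x‖ := norm_toEuclideanLin_le_specNorm_mul _ x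

theorem sigmaMin_sub_specNorm_mul_specNorm_le (A E : Matrix m n ℝ) (B : Matrix n l ℝ) :
    (sigmaMin A - specNorm E) * specNorm B ≤ specNorm ((A + E) * B) := by
  rw [sub_mul, sub_le_iff_le_add]
  calc sigmaMin A * specNorm B
      ≤ specNorm (A * B) := sigmaMin_mul_specNorm_le A B
    _ = specNorm ((A + E) * B - E * B) := by rw [← Matrix.sub_mul, add_sub_cancel_right]
    _ ≤ specNorm ((A + E) * B) + specNorm (E * B) := specNorm_sub_le _ _
    _ ≤ specNorm ((A + E) * B) + specNorm E * specNorm B := by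
        gcongr
        exact specNorm_mul_le E B

theorem stmt_0_general {W ΔW : Matrix m n ℝ} {U : Matrix m l ℝ} {R : Matrix l n ℝ}
    {S : Matrix n l ℝ} (hRS : R * S = 1) (hWR : W + ΔW = U * R)
    (hΔW : specNorm ΔW < sigmaMin W) :
    specNorm S ≤ specNorm U / (sigmaMin W - specNorm ΔW) := by
  rw [le_div_iff₀' (sub_pos.mpr hΔW)]
  calc (sigmaMin W - specNorm ΔW) * specNorm S
      ≤ specNorm ((W + ΔW) * S) := sigmaMin_sub_specNorm_mul_specNorm_le W ΔW S
    _ = specNorm U := by rw [hWR, Matrix.mul_assoc, hRS, Matrix.mul_one]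

end SmallestSingularValue

theorem stmt_0 (m s : ℕ)
    (W ΔW U : Matrix (Fin m) (Fin s) ℝ)
    (R : Matrix (Fin s) (Fin s) ℝ) (hR : IsUnit R.det)
    (hWR : W + ΔW = U * R)
    (hΔW : specNorm ΔW < sigmaMin W) :
    specNorm R⁻¹ ≤ specNorm U / (sigmaMin W - specNorm ΔW) :=
  stmt_0_general (R.mul_nonsing_inv hR) hWR hΔW
end

section
/- Let Q ∈ ℝ^{m×n}. Then ‖I_m − QQᵀ‖² ≤ m + ‖I_n − QᵀQ‖_F², where ‖·‖ is the spectral norm and ‖·‖_F the Frobenius norm. -/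
open scoped Matrix

/-- The Frobenius norm of a real matrix. -/
noncomputable def frobNorm {m n : Type*} [Fintype m] [Fintype n]
    (A : Matrix m n ℝ) : ℝ :=
  Real.sqrt (∑ i, ∑ j, A i j ^ 2)

/-!
The spectral norm is dominated by the Frobenius norm, and for Frobenius norms there is an exact
identity: since `tr (QQᵀ) = tr (QᵀQ)` and `tr ((QQᵀ)²) = tr ((QᵀQ)²)`, expanding `tr ((1 - M)²)` for
`M = QQᵀ` and `M = QᵀQ` gives `‖I_m - QQᵀ‖_F² - m = ‖I_n - QᵀQ‖_F² - n`.
-/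

section Trace

variable {m n R : Type*} [Fintype m] [Fintype n] [DecidableEq m] [DecidableEq n]

theorem trace_one_sub_sq [Ring R] (M : Matrix n n R) :
    ((1 - M) ^ 2).trace = Fintype.card n - 2 * M.trace + (M ^ 2).trace := by
  have h_expand : (1 - M) ^ 2 = 1 - (M + M) + M ^ 2 := by noncomm_ring
  rw [h_expand, Matrix.trace_add, Matrix.trace_sub, Matrix.trace_add, Matrix.trace_one, two_mul]

theorem trace_mul_sq_comm [CommSemiring R] (A : Matrix m n R) (B : Matrix n m R) :
    ((A * B) ^ 2).trace = ((B * A) ^ 2).trace := by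
  calc ((A * B) ^ 2).trace = (A * (B * A * B)).trace := by simp only [sq, Matrix.mul_assoc]
    _ = (B * A * B * A).trace := Matrix.trace_mul_comm _ _
    _ = ((B * A) ^ 2).trace := by rw [sq, Matrix.mul_assoc (B * A)]

theorem trace_one_sub_mul_sq [CommRing R] (A : Matrix m n R) (B : Matrix n m R) :
    ((1 - A * B) ^ 2).trace =
      (Fintype.card m : R) - Fintype.card n + ((1 - B * A) ^ 2).trace := by
  rw [trace_one_sub_sq, trace_one_sub_sq, Matrix.trace_mul_comm A B, trace_mul_sq_comm A B]
  ring

end Trace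

theorem isSymm_one_sub_mul_transpose {m n R : Type*} [Fintype n] [DecidableEq m] [CommRing R]
    (A : Matrix m n R) : (1 - A * Aᵀ).IsSymm :=
  Matrix.isSymm_one.sub (by rw [Matrix.IsSymm, Matrix.transpose_mul, Matrix.transpose_transpose])

section Norms

variable {m n : Type*} [Fintype m] [Fintype n]

theorem frobNorm_nonneg (A : Matrix m n ℝ) : 0 ≤ frobNorm A :=
  Real.sqrt_nonneg _

theorem frobNorm_sq (A : Matrix m n ℝ) : frobNorm A ^ 2 = ∑ i, ∑ j, A i j ^ 2 :=
  Real.sq_sqrt (by positivity)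

theorem norm_toEuclideanLin_le_frobNorm_mul [DecidableEq n] (A : Matrix m n ℝ)
    (x : EuclideanSpace ℝ n) : ‖Matrix.toEuclideanLin A x‖ ≤ frobNorm A * ‖x‖ := by
  refine le_of_sq_le_sq ?_ (mul_nonneg (frobNorm_nonneg A) (norm_nonneg x))
  calc ‖Matrix.toEuclideanLin A x‖ ^ 2 = ∑ i, (∑ j, A i j * x j) ^ 2 :=
        EuclideanSpace.real_norm_sq_eq _
    _ ≤ ∑ i, (∑ j, A i j ^ 2) * ∑ j, x j ^ 2 :=
        Finset.sum_le_sum fun i _ => Finset.sum_mul_sq_le_sq_mul_sq _ (A i) x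
    _ = (frobNorm A * ‖x‖) ^ 2 := by
        rw [← Finset.sum_mul, mul_pow, frobNorm_sq, EuclideanSpace.real_norm_sq_eq]

theorem specNorm_le_frobNorm [DecidableEq n] (A : Matrix m n ℝ) : specNorm A ≤ frobNorm A :=
  ContinuousLinearMap.opNorm_le_bound _ (frobNorm_nonneg A) (norm_toEuclideanLin_le_frobNorm_mul A)

theorem frobNorm_sq_eq_trace_mul_transpose (A : Matrix m n ℝ) :
    frobNorm A ^ 2 = (A * Aᵀ).trace := by
  simp only [frobNorm_sq, Matrix.trace, Matrix.diag_apply, Matrix.mul_apply,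
    Matrix.transpose_apply, pow_two (A _ _)]

theorem frobNorm_sq_eq_trace_sq [DecidableEq n] {A : Matrix n n ℝ} (hA : A.IsSymm) :
    frobNorm A ^ 2 = (A ^ 2).trace := by
  rw [frobNorm_sq_eq_trace_mul_transpose, hA.eq, sq]

theorem frobNorm_one_sub_mul_transpose_sq [DecidableEq m] [DecidableEq n] (Q : Matrix m n ℝ) :
    frobNorm (1 - Q * Qᵀ) ^ 2 =
      (Fintype.card m : ℝ) - Fintype.card n + frobNorm (1 - Qᵀ * Q) ^ 2 := by
  have h_left : (1 - Q * Qᵀ).IsSymm := isSymm_one_sub_mul_transpose Q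
  have h_right : (1 - Qᵀ * Q).IsSymm := isSymm_one_sub_mul_transpose Qᵀ
  rw [frobNorm_sq_eq_trace_sq h_left, frobNorm_sq_eq_trace_sq h_right, trace_one_sub_mul_sq]

end Norms

theorem stmt_17_general {m n : Type*} [Fintype m] [Fintype n] [DecidableEq m] [DecidableEq n]
    (Q : Matrix m n ℝ) :
    specNorm (1 - Q * Qᵀ) ^ 2 ≤
      (Fintype.card m : ℝ) - Fintype.card n + frobNorm (1 - Qᵀ * Q) ^ 2 := by
  calc specNorm (1 - Q * Qᵀ) ^ 2 ≤ frobNorm (1 - Q * Qᵀ) ^ 2 :=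
        pow_le_pow_left₀ (norm_nonneg _) (specNorm_le_frobNorm _) 2
    _ = (Fintype.card m : ℝ) - Fintype.card n + frobNorm (1 - Qᵀ * Q) ^ 2 :=
        frobNorm_one_sub_mul_transpose_sq Q

theorem stmt_17 (m n : ℕ) (Q : Matrix (Fin m) (Fin n) ℝ) :
    specNorm (1 - Q * Qᵀ) ^ 2 ≤ m + frobNorm (1 - Qᵀ * Q) ^ 2 := by
  have h := stmt_17_general Q
  rw [Fintype.card_fin, Fintype.card_fin] at h
  linarith [(Nat.cast_nonneg n : (0 : ℝ) ≤ n)]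
end
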